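/- Let (3/4)·log 3 ≤ D ≤ 1 and let f ∈ 𝒜 satisfy f(z) ≠ 0 and |zf'(z)/f(z) − 1| < D for z ∈ 𝔻\{0} (i.e. f ∈ S*(1 + Dz), the Janowski class with E = 0), with Ω = f(𝔻). Let g be analytic on 𝔻 with g(0) = 0 and g ≺ f, and write g(z) = Σ_{k=1}^∞ b_k z^k. Let r₀ be the unique root in (0, 1) of the equation r·e^{D(1+r)} = 1. Then for every r with 0 ≤ r ≤ r₀, Σ_{k=1}^∞ |b_k| r^k ≤ dist(0, ∂Ω), the Euclidean distance from f(0) = 0 to the boundary of Ω. -/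

import Mathlib

open Complex Metric Set

noncomputable section

/-- The open unit disk in `ℂ`. -/
def 𝔻 : Set ℂ := Metric.ball 0 1

/-- The class `𝒜` of analytic functions on `𝔻` normalized by `f 0 = 0`, `f' 0 = 1`. -/
def IsClassA (f : ℂ → ℂ) : Prop :=
  DifferentiableOn ℂ f 𝔻 ∧ f 0 = 0 ∧ deriv f 0 = 1

/-- `g` is subordinate to `F` on the unit disk. -/
def Subordinate (g F : ℂ → ℂ) : Prop :=
  ∃ ω : ℂ → ℂ, DifferentiableOn ℂ ω 𝔻 ∧ ω 0 = 0 ∧ (∀ z ∈ 𝔻, ω z ∈ 𝔻) ∧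
    ∀ z ∈ 𝔻, g z = F (ω z)

/-- `ψ` is a Ma-Minda function: analytic and univalent on `𝔻`, `Re ψ > 0`, `ψ 0 = 1`,
`ψ' 0 > 0`, with real Taylor coefficients (expressed via `ψ (conj z) = conj (ψ z)`). -/
def MaMinda (ψ : ℂ → ℂ) : Prop :=
  DifferentiableOn ℂ ψ 𝔻 ∧ Set.InjOn ψ 𝔻 ∧ (∀ z ∈ 𝔻, 0 < (ψ z).re) ∧
    ψ 0 = 1 ∧ 0 < (deriv ψ 0).re ∧ (deriv ψ 0).im = 0 ∧
    (∀ z ∈ 𝔻, ψ (starRingEnd ℂ z) = starRingEnd ℂ (ψ z))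

/-- The Ma-Minda starlike class `S*(ψ)`. -/
def StarlikeMM (ψ f : ℂ → ℂ) : Prop :=
  IsClassA f ∧ (∀ z ∈ 𝔻, z ≠ 0 → f z ≠ 0) ∧
    Subordinate (fun z => if z = 0 then 1 else z * deriv f z / f z) ψ

/-- The Ma-Minda convex class `C(ψ)`. -/
def ConvexMM (ψ f : ℂ → ℂ) : Prop :=
  IsClassA f ∧ (∀ z ∈ 𝔻, deriv f z ≠ 0) ∧
    Subordinate (fun z => 1 + z * deriv (deriv f) z / deriv f z) ψ

/-- `f` is starlike of order `α`. -/
def StarlikeOrder (α : ℝ) (f : ℂ → ℂ) : Prop :=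
  IsClassA f ∧ (∀ z ∈ 𝔻, z ≠ 0 → f z ≠ 0) ∧
    ∀ z ∈ 𝔻, z ≠ 0 → α < (z * deriv f z / f z).re

/-- `f` is a (normalized) convex function on `𝔻`. -/
def IsConvexFn (f : ℂ → ℂ) : Prop :=
  IsClassA f ∧ (∀ z ∈ 𝔻, deriv f z ≠ 0) ∧
    ∀ z ∈ 𝔻, 0 < (1 + z * deriv (deriv f) z / deriv f z).re

def Maj (r B : ℝ) (F : ℂ → ℂ) : Prop :=
  ∃ a : ℕ → ℂ, Summable (fun n => ‖a n‖ * r ^ n) ∧ ∑' n, ‖a n‖ * r ^ n ≤ B ∧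
    ∀ z : ℂ, ‖z‖ ≤ r → HasSum (fun n => a n * z ^ n) (F z)

lemma norm_term_le {r : ℝ} {z : ℂ} (hz : ‖z‖ ≤ r) (a : ℂ) (n : ℕ) :
    ‖a * z ^ n‖ ≤ ‖a‖ * r ^ n := by
  rw [norm_mul, norm_pow]; gcongr

lemma Maj.norm_le {r B : ℝ} {F : ℂ → ℂ} (h : Maj r B F) {z : ℂ} (hz : ‖z‖ ≤ r) : ‖F z‖ ≤ B := by
  obtain ⟨a, hs, hB, ha⟩ := h
  refine le_trans ?_ hB
  rw [← (ha z hz).tsum_eq]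
  exact tsum_of_norm_bounded hs.hasSum (fun n => norm_term_le hz _ _)

lemma Maj.congr {r B : ℝ} {F G : ℂ → ℂ} (h : Maj r B F) (hFG : ∀ z, ‖z‖ ≤ r → F z = G z) :
    Maj r B G := by
  obtain ⟨a, hs, hB, ha⟩ := h
  exact ⟨a, hs, hB, fun z hz => hFG z hz ▸ ha z hz⟩

lemma maj_const {r : ℝ} (c : ℂ) : Maj r ‖c‖ (fun _ => c) := by
  have h : HasSum (fun n => ‖(if n = 0 then c else 0 : ℂ)‖ * r ^ n) ‖c‖ := by
    convert hasSum_single (f := fun n => ‖(if n = 0 then c else 0 : ℂ)‖ * r ^ n) 0 ?_ using 1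
    · simp
    · intro n hn; simp [hn]
  refine ⟨fun n => if n = 0 then c else 0, h.summable, h.tsum_eq.le, fun z hz => ?_⟩
  convert hasSum_single (f := fun n => (if n = 0 then c else 0 : ℂ) * z ^ n) 0 ?_ using 1
  · simp
  · intro n hn; simp [hn]

lemma maj_id {r : ℝ} : Maj r r (fun z => z) := by
  have h : HasSum (fun n => ‖(if n = 1 then 1 else 0 : ℂ)‖ * r ^ n) r := by
    convert hasSum_single (f := fun n => ‖(if n = 1 then 1 else 0 : ℂ)‖ * r ^ n) 1 ?_ using 1
    · simp
    · intro n hn; simp [hn]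
  refine ⟨fun n => if n = 1 then 1 else 0, h.summable, h.tsum_eq.le, fun z hz => ?_⟩
  convert hasSum_single (f := fun n => (if n = 1 then 1 else 0 : ℂ) * z ^ n) 1 ?_ using 1
  · simp
  · intro n hn; simp [hn]

lemma Maj.mul {r B C : ℝ} {F G : ℂ → ℂ} (hr : 0 ≤ r) (hF : Maj r B F) (hG : Maj r C G) :
    Maj r (B * C) (fun z => F z * G z) := by
  obtain ⟨a, has, haB, ha⟩ := hF
  obtain ⟨b, hbs, hbC, hb⟩ := hG
  have ha0 : ∀ n, 0 ≤ ‖a n‖ * r ^ n := fun n => by positivity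
  have hb0 : ∀ n, 0 ≤ ‖b n‖ * r ^ n := fun n => by positivity
  have han : Summable (fun n => ‖(‖a n‖ * r ^ n)‖) := has.norm
  have hbn : Summable (fun n => ‖(‖b n‖ * r ^ n)‖) := hbs.norm
  have hS := (summable_norm_sum_mul_antidiagonal_of_summable_norm han hbn).of_norm
  have hT := tsum_mul_tsum_eq_tsum_sum_antidiagonal_of_summable_norm han hbn
  have hle : ∀ n, ‖∑ kl ∈ Finset.HasAntidiagonal.antidiagonal n, a kl.1 * b kl.2‖ * r ^ n ≤
      ∑ kl ∈ Finset.HasAntidiagonal.antidiagonal n, (‖a kl.1‖ * r ^ kl.1) * (‖b kl.2‖ * r ^ kl.2) := by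
    intro n
    calc _ ≤ (∑ kl ∈ Finset.HasAntidiagonal.antidiagonal n, ‖a kl.1 * b kl.2‖) * r ^ n := by
          gcongr; exact norm_sum_le _ _
      _ = _ := by
          rw [Finset.sum_mul]
          refine Finset.sum_congr rfl fun kl hkl => ?_
          rw [← Finset.HasAntidiagonal.mem_antidiagonal.1 hkl, norm_mul, pow_add]; ring
  have hsum : Summable (fun n => ‖∑ kl ∈ Finset.HasAntidiagonal.antidiagonal n, a kl.1 * b kl.2‖ * r ^ n) :=
    Summable.of_nonneg_of_le (fun n => by positivity) hle hS
  refine ⟨fun n => ∑ kl ∈ Finset.HasAntidiagonal.antidiagonal n, a kl.1 * b kl.2, hsum, ?_, fun z hz => ?_⟩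
  · calc _ ≤ _ := hsum.tsum_le_tsum hle hS
      _ = _ := hT.symm
      _ ≤ B * C := mul_le_mul haB hbC (tsum_nonneg hb0) ((tsum_nonneg ha0).trans haB)
  · have h1 : Summable (fun n => ‖a n * z ^ n‖) :=
      Summable.of_nonneg_of_le (fun n => norm_nonneg _) (fun n => norm_term_le hz _ _) has
    have h2 : Summable (fun n => ‖b n * z ^ n‖) :=
      Summable.of_nonneg_of_le (fun n => norm_nonneg _) (fun n => norm_term_le hz _ _) hbs
    have h3 := tsum_mul_tsum_eq_tsum_sum_antidiagonal_of_summable_norm h1 h2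
    have h4 := (summable_norm_sum_mul_antidiagonal_of_summable_norm h1 h2).of_norm
    rw [(ha z hz).tsum_eq, (hb z hz).tsum_eq] at h3
    show HasSum _ (F z * G z)
    rw [h3]
    have e : (fun n => (∑ kl ∈ Finset.HasAntidiagonal.antidiagonal n, a kl.1 * b kl.2) * z ^ n) =
        fun n => ∑ kl ∈ Finset.HasAntidiagonal.antidiagonal n,
          a kl.1 * z ^ kl.1 * (b kl.2 * z ^ kl.2) := by
      funext n
      rw [Finset.sum_mul]
      refine Finset.sum_congr rfl fun kl hkl => ?_
      rw [← Finset.HasAntidiagonal.mem_antidiagonal.1 hkl, pow_add]; ring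
    show HasSum (fun n => (∑ kl ∈ Finset.HasAntidiagonal.antidiagonal n, a kl.1 * b kl.2) * z ^ n) _
    rw [e]
    exact h4.hasSum

lemma Maj.pow {r B : ℝ} {F : ℂ → ℂ} (hr : 0 ≤ r) (hF : Maj r B F) (n : ℕ) :
    Maj r (B ^ n) (fun z => F z ^ n) := by
  induction n with
  | zero => simpa using maj_const (r := r) 1
  | succ n ih => simpa only [pow_succ] using ih.mul hr hF

lemma maj_hasSum {r B : ℝ} (hr : 0 ≤ r) {F : ℕ → ℂ → ℂ} {C : ℕ → ℝ} {G : ℂ → ℂ}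
    (hF : ∀ j, Maj r (C j) (F j)) (hC : HasSum C B)
    (hG : ∀ z, ‖z‖ ≤ r → HasSum (fun j => F j z) (G z)) : Maj r B G := by
  choose a has haC ha using hF
  have h0 : ∀ p : ℕ × ℕ, 0 ≤ ‖a p.1 p.2‖ * r ^ p.2 := fun p => by positivity
  have hP : Summable (fun p : ℕ × ℕ => ‖a p.1 p.2‖ * r ^ p.2) := by
    rw [summable_prod_of_nonneg h0]
    refine ⟨has, Summable.of_nonneg_of_le (fun j => tsum_nonneg fun n => h0 (j, n)) haC hC.summable⟩
  have hP' : Summable (fun p : ℕ × ℕ => ‖a p.2 p.1‖ * r ^ p.1) := hP.prod_symm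
  have hPB : ∑' p : ℕ × ℕ, ‖a p.1 p.2‖ * r ^ p.2 ≤ B := by
    rw [hP.tsum_prod, ← hC.tsum_eq]
    exact hP.prod.tsum_le_tsum haC hC.summable
  have hsw : ∑' p : ℕ × ℕ, ‖a p.2 p.1‖ * r ^ p.1 = ∑' p : ℕ × ℕ, ‖a p.1 p.2‖ * r ^ p.2 :=
    (Equiv.prodComm ℕ ℕ).tsum_eq (fun p : ℕ × ℕ => ‖a p.1 p.2‖ * r ^ p.2)
  rcases hr.eq_or_lt with rfl | hr
  · -- radius zero
    have hG0 := hG 0 (by simp)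
    have hB : ‖G 0‖ ≤ B := by
      rw [← hG0.tsum_eq]
      exact tsum_of_norm_bounded hC (fun j =>
        Maj.norm_le ⟨a j, has j, haC j, ha j⟩ (by simp))
    obtain ⟨c, h1, h2, h3⟩ := maj_const (r := 0) (G 0)
    exact ⟨c, h1, h2.trans hB, fun z hz => by
      obtain rfl : z = 0 := by simpa using hz
      exact h3 0 hz⟩
  have hcol : ∀ n, Summable (fun j => ‖a j n‖) := by
    intro n
    have := hP'.prod_factor n
    have h2 := this.mul_right ((r ^ n)⁻¹)
    refine h2.congr fun j => ?_
    have : r ^ n ≠ 0 := by positivity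
    field_simp
  have hle : ∀ n, ‖∑' j, a j n‖ * r ^ n ≤ ∑' j, ‖a j n‖ * r ^ n := by
    intro n
    rw [tsum_mul_right]
    gcongr
    exact norm_tsum_le_tsum_norm (hcol n)
  have hsum : Summable (fun n => ‖∑' j, a j n‖ * r ^ n) :=
    Summable.of_nonneg_of_le (fun n => by positivity) hle hP'.prod
  refine ⟨fun n => ∑' j, a j n, hsum, ?_, fun z hz => ?_⟩
  · calc _ ≤ _ := hsum.tsum_le_tsum hle hP'.prod
      _ = _ := hP'.tsum_prod.symm
      _ ≤ B := hsw.trans_le hPB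
  · have hz1 : Summable (fun p : ℕ × ℕ => a p.1 p.2 * z ^ p.2) :=
      Summable.of_norm_bounded hP (fun p => norm_term_le hz _ _)
    have e1 : ∑' p : ℕ × ℕ, a p.1 p.2 * z ^ p.2 = G z := by
      rw [hz1.tsum_prod, ← (hG z hz).tsum_eq]
      exact tsum_congr fun j => (ha j z hz).tsum_eq
    have hz2 : HasSum (fun p : ℕ × ℕ => a p.2 p.1 * z ^ p.1) (G z) := by
      rw [← e1]
      exact (Equiv.prodComm ℕ ℕ).hasSum_iff.2 hz1.hasSum
    refine hz2.prod_fiberwise fun n => ?_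
    exact ((hcol n).of_norm.hasSum).mul_right (z ^ n)

lemma Maj.comp {r ρ B : ℝ} {F ω : ℂ → ℂ} (hr : 0 ≤ r) (hF : Maj ρ B F) (hω : Maj r ρ ω) :
    Maj r B (fun z => F (ω z)) := by
  obtain ⟨a, has, haB, ha⟩ := hF
  have key : Maj r (∑' n, ‖a n‖ * ρ ^ n) (fun z => F (ω z)) :=
    maj_hasSum hr (F := fun n z => a n * ω z ^ n)
      (fun n => (maj_const (a n)).mul hr (hω.pow hr n)) has.hasSum
      (fun z hz => ha _ (hω.norm_le hz))
  obtain ⟨c, h1, h2, h3⟩ := key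
  exact ⟨c, h1, h2.trans haB, h3⟩

lemma maj_exp (ρ : ℝ) : Maj ρ (Real.exp ρ) Complex.exp := by
  have h : HasSum (fun n : ℕ => ‖((n.factorial : ℂ))⁻¹‖ * ρ ^ n) (Real.exp ρ) := by
    have := NormedSpace.expSeries_div_hasSum_exp ρ
    rw [← Real.exp_eq_exp_ℝ] at this
    have e : (fun n : ℕ => ‖((n.factorial : ℂ))⁻¹‖ * ρ ^ n) = fun n => ρ ^ n / (n.factorial : ℝ) := by
      funext n
      rw [norm_inv, Complex.norm_natCast, div_eq_inv_mul]
    rw [e]; exact this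
  refine ⟨fun n => ((n.factorial : ℂ))⁻¹, h.summable, h.tsum_eq.le, fun z _ => ?_⟩
  have := NormedSpace.expSeries_div_hasSum_exp z
  rw [← Complex.exp_eq_exp_ℂ] at this
  have e : (fun n : ℕ => ((n.factorial : ℂ))⁻¹ * z ^ n) = fun n => z ^ n / (n.factorial : ℂ) := by
    funext n
    rw [div_eq_inv_mul]
  rw [e]; exact this


lemma circleAverage_div_pow {p : ℂ → ℂ} {ρ : ℝ} (hρ : 0 < ρ) (hp : DiffContOnCl ℂ p (ball 0 ρ))
    (n : ℕ) :
    Real.circleAverage (fun z => (z ^ n)⁻¹ * p z) 0 ρ = (n.factorial : ℂ)⁻¹ * iteratedDeriv n p 0 := by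
  rw [Real.circleAverage_eq_circleIntegral hρ.ne']
  have h := DiffContOnCl.circleIntegral_one_div_sub_center_pow_smul hρ n hp
  have e : (fun z : ℂ => (z - 0)⁻¹ • ((z ^ n)⁻¹ * p z)) = fun z => (1 / (z - 0) ^ (n + 1)) • p z := by
    funext z
    simp only [smul_eq_mul, sub_zero, pow_succ, one_div, mul_inv]; ring
  rw [e, h]
  have : (2 * (Real.pi : ℂ) * I) ≠ 0 := by simp [Real.pi_ne_zero]
  simp only [smul_eq_mul]
  field_simp

lemma carath_aux {p : ℂ → ℂ} (hp : DifferentiableOn ℂ p (ball 0 1))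
    (hre : ∀ z ∈ ball (0 : ℂ) 1, 0 ≤ (p z).re) {ρ : ℝ} (hρ : 0 < ρ) (hρ1 : ρ < 1) {n : ℕ}
    (hn : n ≠ 0) :
    ‖(n.factorial : ℂ)⁻¹ * iteratedDeriv n p 0‖ * ρ ^ n ≤ 2 * (p 0).re := by
  set c := (n.factorial : ℂ)⁻¹ * iteratedDeriv n p 0 with hc
  obtain ⟨γ, hγ, hγc⟩ : ∃ γ : ℂ, ‖γ‖ = 1 ∧ (starRingEnd ℂ γ) * c = -(‖c‖ : ℂ) := by
    by_cases h0 : c = 0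
    · exact ⟨1, by simp, by simp [h0]⟩
    · refine ⟨-(c / ‖c‖), by simp [h0], ?_⟩
      have : (‖c‖ : ℂ) ≠ 0 := by simpa using h0
      simp only [map_neg, map_div₀, conj_ofReal]
      field_simp
      rw [mul_comm, mul_conj, normSq_eq_norm_sq]; push_cast; ring
  have hcl : closedBall (0 : ℂ) ρ ⊆ ball 0 1 := closedBall_subset_ball hρ1
  have hpc : DiffContOnCl ℂ p (ball 0 ρ) := (hp.mono (by
    rw [closure_ball _ hρ.ne']; exact hcl)).diffContOnCl
  have hsub : sphere (0 : ℂ) |ρ| ⊆ ball 0 1 := by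
    rw [abs_of_pos hρ]; exact sphere_subset_closedBall.trans hcl
  have hpcont : ContinuousOn p (sphere (0 : ℂ) |ρ|) := hp.continuousOn.mono hsub
  have A1 : Real.circleAverage p 0 ρ = p 0 :=
    DiffContOnCl.circleAverage (by rwa [abs_of_pos hρ])
  have A2 : Real.circleAverage (fun z => z ^ n * p z) 0 ρ = 0 := by
    have hd : DifferentiableOn ℂ (fun z : ℂ => z ^ n * p z) (ball 0 1) := by fun_prop
    rw [DiffContOnCl.circleAverage]
    · simp [hn]
    · rw [abs_of_pos hρ]
      exact (hd.mono (by rw [closure_ball _ hρ.ne']; exact hcl)).diffContOnCl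
  have A3 := circleAverage_div_pow hρ hpc n
  rw [← hc] at A3
  have I1 : CircleIntegrable p 0 ρ := hpcont.circleIntegrable'
  have hz0 : ∀ z ∈ sphere (0 : ℂ) |ρ|, z ^ n ≠ 0 := by
    intro z hz
    apply pow_ne_zero
    rintro rfl
    rw [abs_of_pos hρ] at hz
    simp at hz
    exact hρ.ne hz
  have C2 : ContinuousOn (fun z => z ^ n * p z) (sphere (0 : ℂ) |ρ|) :=
    (continuous_pow n).continuousOn.mul hpcont
  have C3 : ContinuousOn (fun z => (z ^ n)⁻¹ * p z) (sphere (0 : ℂ) |ρ|) :=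
    ((continuous_pow n).continuousOn.inv₀ hz0).mul hpcont
  have I2 : CircleIntegrable (fun z => (γ / 2 / ρ ^ n) • (z ^ n * p z)) 0 ρ :=
    (show ContinuousOn (fun z => (γ / 2 / ρ ^ n) • (z ^ n * p z)) _ from
      continuousOn_const.mul C2).circleIntegrable'
  have I3 : CircleIntegrable (fun z => (starRingEnd ℂ γ / 2 * ρ ^ n) • ((z ^ n)⁻¹ * p z)) 0 ρ :=
    (show ContinuousOn (fun z => (starRingEnd ℂ γ / 2 * ρ ^ n) • ((z ^ n)⁻¹ * p z)) _ from
      continuousOn_const.mul C3).circleIntegrable'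
  have hG := Real.circleAverage_fun_add (I1.add I2) I3
  rw [Real.circleAverage_add I1 I2, Real.circleAverage_fun_smul, Real.circleAverage_fun_smul,
    A1, A2, A3] at hG
  have hL := Complex.reCLM.circleAverage_comp_comm ((I1.add I2).add I3)
  have hnn : 0 ≤ Real.circleAverage (Complex.reCLM ∘ ((p + fun z => (γ / 2 / ρ ^ n) • (z ^ n * p z)) +
      fun z => (starRingEnd ℂ γ / 2 * ρ ^ n) • ((z ^ n)⁻¹ * p z))) 0 ρ := by
    apply Real.circleAverage_nonneg_of_nonneg
    intro z hz
    have hz1 : ‖z‖ = ρ := by simpa [abs_of_pos hρ] using hz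
    have hzn := hz0 z hz
    have hinv : (z ^ n)⁻¹ = starRingEnd ℂ (z ^ n) / ((ρ : ℂ) ^ n) ^ 2 := by
      rw [inv_def, normSq_eq_norm_sq, norm_pow, hz1]; push_cast; rw [div_eq_mul_inv]
    have hρn : (ρ : ℂ) ^ n ≠ 0 := pow_ne_zero _ (by exact_mod_cast hρ.ne')
    set u : ℂ := γ * z ^ n / ρ ^ n with hu
    have hun : ‖u‖ = 1 := by
      rw [hu, norm_div, norm_mul, norm_pow, norm_pow, hz1, hγ]
      simp [abs_of_pos hρ, hρ.ne']
    have hexp : p z + (γ / 2 / ρ ^ n) • (z ^ n * p z) +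
        (starRingEnd ℂ γ / 2 * ρ ^ n) • ((z ^ n)⁻¹ * p z) = ((1 + u.re : ℝ) : ℂ) * p z := by
      push_cast
      rw [re_eq_add_conj, hinv, hu]
      simp only [map_div₀, map_mul, map_pow, conj_ofReal, smul_eq_mul]
      field_simp
      ring
    simp only [Function.comp_apply, Pi.add_apply, reCLM_apply]
    rw [hexp, re_ofReal_mul]
    have := (abs_le.1 ((abs_re_le_norm u).trans hun.le)).1
    exact mul_nonneg (by linarith) (hre z (hsub hz))
  rw [hL] at hnn
  have hG' : Real.circleAverage ((p + fun z => (γ / 2 / ρ ^ n) • (z ^ n * p z)) +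
      fun z => (starRingEnd ℂ γ / 2 * ρ ^ n) • ((z ^ n)⁻¹ * p z)) 0 ρ = 
      p 0 + ((-(‖c‖ * ρ ^ n / 2) : ℝ) : ℂ) := by
    refine Eq.trans hG ?_
    push_cast
    simp only [smul_eq_mul]
    linear_combination (ρ ^ n / 2 : ℂ) * hγc
  rw [hG'] at hnn
  simp only [reCLM_apply, add_re, ofReal_re] at hnn
  linarith

lemma carath {p : ℂ → ℂ} (hp : DifferentiableOn ℂ p (ball 0 1))
    (hre : ∀ z ∈ ball (0 : ℂ) 1, 0 ≤ (p z).re) {n : ℕ} (hn : n ≠ 0) :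
    ‖(n.factorial : ℂ)⁻¹ * iteratedDeriv n p 0‖ ≤ 2 * (p 0).re := by
  have hcont : Continuous (fun ρ : ℝ => ‖(n.factorial : ℂ)⁻¹ * iteratedDeriv n p 0‖ * ρ ^ n) := by
    fun_prop
  have ht : Filter.Tendsto (fun ρ : ℝ => ‖(n.factorial : ℂ)⁻¹ * iteratedDeriv n p 0‖ * ρ ^ n)
      (nhdsWithin 1 (Iio 1)) (nhds (‖(n.factorial : ℂ)⁻¹ * iteratedDeriv n p 0‖ * 1 ^ n)) :=
    (hcont.tendsto 1).mono_left nhdsWithin_le_nhds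
  rw [one_pow, mul_one] at ht
  refine le_of_tendsto ht ?_
  filter_upwards [Ioo_mem_nhdsLT (show (0 : ℝ) < 1 by norm_num)] with ρ hρ
  exact carath_aux hp hre hρ.1 hρ.2 hn

lemma bohr_coeff {χ : ℂ → ℂ} (hp : DifferentiableOn ℂ χ (ball 0 1))
    (hb : ∀ z ∈ ball (0 : ℂ) 1, ‖χ z‖ ≤ 1) {n : ℕ} (hn : n ≠ 0) :
    ‖(n.factorial : ℂ)⁻¹ * iteratedDeriv n χ 0‖ ≤ 2 * (1 - ‖χ 0‖) := by
  obtain ⟨α, hα, hαc⟩ : ∃ α : ℂ, ‖α‖ = 1 ∧ α * χ 0 = (‖χ 0‖ : ℂ) := by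
    by_cases h0 : χ 0 = 0
    · exact ⟨1, by simp, by simp [h0]⟩
    · refine ⟨‖χ 0‖ / χ 0, by simp [h0], ?_⟩
      field_simp
  have h := carath (p := fun z => 1 - α * χ z) (by fun_prop) (fun z hz => by
    have h1 : (α * χ z).re ≤ 1 := (re_le_norm _).trans (by rw [norm_mul, hα, one_mul]; exact hb z hz)
    simpa using h1) hn
  have e : iteratedDeriv n (fun z => 1 - α * χ z) 0 = - (α * iteratedDeriv n χ 0) := by
    rw [iteratedDeriv_const_sub (Nat.pos_of_ne_zero hn)]
    simp
  rw [e, hαc] at h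
  simpa [hα] using h

lemma bohr_sum {χ : ℂ → ℂ} (hp : DifferentiableOn ℂ χ (ball 0 1))
    (hb : ∀ z ∈ ball (0 : ℂ) 1, ‖χ z‖ ≤ 1) {r : ℝ} (hr : 0 ≤ r) (hr3 : r ≤ 1 / 3) :
    Summable (fun n : ℕ => ‖(n.factorial : ℂ)⁻¹ * iteratedDeriv n χ 0‖ * r ^ n) ∧
    ∑' n : ℕ, ‖(n.factorial : ℂ)⁻¹ * iteratedDeriv n χ 0‖ * r ^ n ≤ 1 := by
  set t := ‖χ 0‖ with ht
  have ht1 : t ≤ 1 := hb 0 (by simp)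
  have hu : HasSum (fun n : ℕ => 2 * (1 - t) * (1 / 3 : ℝ) ^ n +
      (if n = 0 then t - 2 * (1 - t) else 0)) 1 := by
    have h1 := (hasSum_geometric_of_lt_one (r := (1 / 3 : ℝ)) (by norm_num) (by norm_num)).mul_left
      (2 * (1 - t))
    have h2 := hasSum_ite_eq (0 : ℕ) (t - 2 * (1 - t))
    have h3 := h1.add h2
    have e : (1 : ℝ) = 2 * (1 - t) * (1 - 1 / 3)⁻¹ + (t - 2 * (1 - t)) := by
      norm_num
      ring
    rw [← e] at h3
    exact h3
  have hle : ∀ n : ℕ, ‖(n.factorial : ℂ)⁻¹ * iteratedDeriv n χ 0‖ * r ^ n ≤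
      2 * (1 - t) * (1 / 3 : ℝ) ^ n + (if n = 0 then t - 2 * (1 - t) else 0) := by
    intro n
    by_cases hn : n = 0
    · subst hn; simp [ht]
    · simp only [hn, if_false, add_zero]
      have := bohr_coeff hp hb hn
      gcongr
  have hs := Summable.of_nonneg_of_le (fun n => by positivity) hle hu.summable
  exact ⟨hs, (hs.tsum_le_tsum hle hu.summable).trans hu.tsum_eq.le⟩

lemma taylor_hasSum {χ : ℂ → ℂ} (hp : DifferentiableOn ℂ χ (ball 0 1)) {z : ℂ} (hz : ‖z‖ < 1) :
    HasSum (fun n : ℕ => ((n.factorial : ℂ)⁻¹ * iteratedDeriv n χ 0) * z ^ n) (χ z) := by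
  have h := Complex.hasSum_taylorSeries_on_ball hp (z := z) (by simpa using hz)
  have e : (fun n : ℕ => ((n.factorial : ℂ)⁻¹ * iteratedDeriv n χ 0) * z ^ n) =
      fun n : ℕ ↦ (n.factorial : ℂ)⁻¹ • (z - 0) ^ n • iteratedDeriv n χ 0 := by
    funext n; simp only [smul_eq_mul, sub_zero]; ring
  rw [e]; exact h

lemma bohr_maj {χ : ℂ → ℂ} (hp : DifferentiableOn ℂ χ (ball 0 1))
    (hb : ∀ z ∈ ball (0 : ℂ) 1, ‖χ z‖ ≤ 1) {r : ℝ} (hr : 0 ≤ r) (hr3 : r ≤ 1 / 3) :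
    Maj r 1 χ := by
  obtain ⟨h1, h2⟩ := bohr_sum hp hb hr hr3
  exact ⟨_, h1, h2, fun z hz => taylor_hasSum hp (by linarith)⟩

lemma schwarz_maj {ω : ℂ → ℂ} (hp : DifferentiableOn ℂ ω (ball 0 1)) (h0 : ω 0 = 0)
    (hb : ∀ z ∈ ball (0 : ℂ) 1, ω z ∈ ball (0 : ℂ) 1) {r : ℝ} (hr : 0 ≤ r) (hr3 : r ≤ 1 / 3) :
    Maj r r ω := by
  have hχ : DifferentiableOn ℂ (dslope ω 0) (ball 0 1) :=
    (Complex.differentiableOn_dslope (ball_mem_nhds 0 one_pos)).2 hp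
  have hχb : ∀ z ∈ ball (0 : ℂ) 1, ‖dslope ω 0 z‖ ≤ 1 := by
    intro z hz
    have := Complex.norm_dslope_le_div_of_mapsTo_ball (R₂ := 1) hp (fun w hw => by
      rw [h0]; exact ball_subset_closedBall (hb w hw)) hz
    simpa using this
  have := (maj_id (r := r)).mul hr (bohr_maj hχ hχb hr hr3)
  rw [mul_one] at this
  refine this.congr fun z _ => ?_
  have := sub_smul_dslope ω 0 z
  simpa [h0] using this

lemma primitive_maj {h : ℂ → ℂ} (hd : DifferentiableOn ℂ h (ball 0 1)) (h0 : h 0 = 0) {D : ℝ}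
    (hD : 0 < D) (hb : ∀ z ∈ ball (0 : ℂ) 1, ‖deriv h z‖ ≤ D) {r : ℝ} (hr : 0 ≤ r)
    (hr3 : r ≤ 1 / 3) : Maj r (D * r) h := by
  have hd' : DifferentiableOn ℂ (deriv h) (ball 0 1) := hd.deriv isOpen_ball
  obtain ⟨h1, h2⟩ := bohr_sum (χ := fun z => (D : ℂ)⁻¹ * deriv h z) (by fun_prop) (fun z hz => by
    rw [norm_mul, norm_inv, norm_real, Real.norm_eq_abs, abs_of_pos hD, inv_mul_le_iff₀ hD, mul_one]
    exact hb z hz) hr hr3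
  have hle : ∀ n : ℕ, ‖((n + 1).factorial : ℂ)⁻¹ * iteratedDeriv (n + 1) h 0‖ * r ^ (n + 1) ≤
      D * r * (‖(n.factorial : ℂ)⁻¹ * iteratedDeriv n (fun z => (D : ℂ)⁻¹ * deriv h z) 0‖ * r ^ n) := by
    intro n
    rw [iteratedDeriv_const_mul_field, iteratedDeriv_succ']
    simp only [norm_mul, norm_inv, norm_real, Real.norm_eq_abs, abs_of_pos hD, Complex.norm_natCast]
    have e : D * r * ((n.factorial : ℝ)⁻¹ * (D⁻¹ * ‖iteratedDeriv n (deriv h) 0‖) * r ^ n) =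
      (n.factorial : ℝ)⁻¹ * ‖iteratedDeriv n (deriv h) 0‖ * r ^ (n + 1) := by
      field_simp
      ring
    rw [e]
    have : (n.factorial : ℝ) ≤ ((n + 1).factorial : ℝ) := by
      exact_mod_cast Nat.factorial_le (Nat.le_succ n)
    have hpos : (0 : ℝ) < n.factorial := by exact_mod_cast n.factorial_pos
    gcongr
  have hS := Summable.of_nonneg_of_le (fun n => by positivity) hle (h1.mul_left (D * r))
  have hS' : Summable (fun n : ℕ => ‖(n.factorial : ℂ)⁻¹ * iteratedDeriv n h 0‖ * r ^ n) :=
    (summable_nat_add_iff 1).1 hS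
  refine ⟨_, hS', ?_, fun z hz => taylor_hasSum hd (by linarith)⟩
  rw [hS'.tsum_eq_zero_add]
  simp only [Nat.factorial_zero, iteratedDeriv_zero, h0, mul_zero, norm_zero, zero_mul, zero_add]
  calc _ ≤ _ := hS.tsum_le_tsum hle (h1.mul_left (D * r))
    _ = D * r * _ := tsum_mul_left
    _ ≤ D * r * 1 := by gcongr
    _ = D * r := mul_one _

lemma exists_log {f : ℂ → ℂ} (hf : DifferentiableOn ℂ f (ball 0 1)) (f0 : f 0 = 0)
    (f1 : deriv f 0 = 1) {D : ℝ}
    (hfD : ∀ z ∈ ball (0 : ℂ) 1, z ≠ 0 → f z ≠ 0 ∧ ‖z * deriv f z / f z - 1‖ < D) (hD : 0 < D) :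
    ∃ h : ℂ → ℂ, DifferentiableOn ℂ h (ball 0 1) ∧ h 0 = 0 ∧
      (∀ z ∈ ball (0 : ℂ) 1, ‖deriv h z‖ ≤ D) ∧
      ∀ z ∈ ball (0 : ℂ) 1, f z = z * Complex.exp (h z) := by
  set q := dslope f 0 with hq
  have hqd : DifferentiableOn ℂ q (ball 0 1) :=
    (Complex.differentiableOn_dslope (ball_mem_nhds 0 one_pos)).2 hf
  have hfq : ∀ z, f z = z * q z := fun z => by
    have := sub_smul_dslope f 0 z
    simpa [f0] using this.symm
  have hq0 : q 0 = 1 := by rw [hq, dslope_same, f1]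
  have hqn : ∀ z ∈ ball (0 : ℂ) 1, q z ≠ 0 := by
    intro z hz hzq
    by_cases h : z = 0
    · rw [h, hq0] at hzq; exact one_ne_zero hzq
    · apply (hfD z hz h).1; rw [hfq, hzq, mul_zero]
  have hqa : ∀ z ∈ ball (0 : ℂ) 1, HasDerivAt q (deriv q z) z := fun z hz =>
    (hqd.differentiableAt (isOpen_ball.mem_nhds hz)).hasDerivAt
  have hLd : DifferentiableOn ℂ (fun z => deriv q z / q z) (ball 0 1) :=
    (hqd.deriv isOpen_ball).div hqd hqn
  have hm : DifferentiableOn ℂ (fun z => z * (deriv q z / q z)) (ball 0 1) :=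
    differentiableOn_id.mul hLd
  have hmaps : MapsTo (fun z => z * (deriv q z / q z)) (ball 0 1)
      (closedBall ((fun z => z * (deriv q z / q z)) 0) D) := by
    intro z hz
    simp only [zero_mul, mem_closedBall, dist_zero_right]
    by_cases h : z = 0
    · simp [h, hD.le]
    · have hd : deriv f z = q z + z * deriv q z := by
        have h1 : HasDerivAt f (1 * q z + z * deriv q z) z := by
          have := (hasDerivAt_id z).mul (hqa z hz)
          rw [show f = fun z => z * q z from funext hfq]
          exact this
        rw [h1.deriv, one_mul]
      have h2 := (hfD z hz h).2.le
      rw [hd, hfq z] at h2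
      have hqz := hqn z hz
      have e : z * (q z + z * deriv q z) / (z * q z) - 1 = z * (deriv q z / q z) := by
        field_simp
        ring
      rwa [e] at h2
  have hLb : ∀ z ∈ ball (0 : ℂ) 1, ‖deriv q z / q z‖ ≤ D := by
    intro z hz
    have h1 := Complex.norm_dslope_le_div_of_mapsTo_ball hm hmaps hz
    rw [div_one] at h1
    have e : deriv q z / q z = dslope (fun z => z * (deriv q z / q z)) 0 z := by
      by_cases h : z = 0
      · subst h
        rw [dslope_same]
        have h2 : HasDerivAt (fun z => deriv q z / q z) (deriv (fun z => deriv q z / q z) 0) 0 :=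
          (hLd.differentiableAt (isOpen_ball.mem_nhds hz)).hasDerivAt
        have h3 : HasDerivAt (fun z => z * (deriv q z / q z))
          (1 * (deriv q 0 / q 0) + 0 * deriv (fun z => deriv q z / q z) 0) 0 := (hasDerivAt_id _).mul h2
        rw [h3.deriv]; ring
      · rw [dslope_of_ne _ h, slope_def_field]
        simp only [zero_mul, sub_zero]
        field_simp
    rw [e]
    exact h1
  obtain ⟨h, h0, hh⟩ := hLd.isExactOn_ball.with_val_at 0 0
  refine ⟨h, fun z hz => (hh z hz).differentiableAt.differentiableWithinAt, h0, fun z hz => by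
    rw [(hh z hz).deriv]; exact hLb z hz, fun z hz => ?_⟩
  have hder : ∀ z ∈ ball (0 : ℂ) 1, HasDerivAt (fun z => q z * Complex.exp (-h z)) 0 z := by
    intro z hz
    have h1 : HasDerivAt (fun z => q z * Complex.exp (-h z)) (deriv q z * Complex.exp (-h z) +
        q z * (Complex.exp (-h z) * -(deriv q z / q z))) z :=
      (hqa z hz).mul ((hh z hz).neg.cexp)
    have hne := hqn z hz
    have e : deriv q z * Complex.exp (-h z) +
        q z * (Complex.exp (-h z) * -(deriv q z / q z)) = 0 := by
      field_simp
      ring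
    rw [e] at h1
    exact h1
  have hc := isOpen_ball.is_const_of_deriv_eq_zero (convex_ball (0 : ℂ) 1).isPreconnected
    (f := fun z => q z * Complex.exp (-h z))
    (fun z hz => (hder z hz).differentiableAt.differentiableWithinAt)
    (fun z hz => (hder z hz).deriv) hz (mem_ball_self one_pos)
  simp only [h0, hq0, neg_zero, Complex.exp_zero, mul_one] at hc
  rw [hfq]
  congr 1
  rw [Complex.exp_neg] at hc
  have := Complex.exp_ne_zero (h z)
  field_simp at hc
  exact hc

lemma dist_bound {f h : ℂ → ℂ} {D : ℝ} (hD : 0 < D) (hf : DifferentiableOn ℂ f (ball 0 1))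
    (hd : DifferentiableOn ℂ h (ball 0 1)) (h0 : h 0 = 0)
    (hb : ∀ z ∈ ball (0 : ℂ) 1, ‖deriv h z‖ ≤ D)
    (hfh : ∀ z ∈ ball (0 : ℂ) 1, f z = z * Complex.exp (h z)) :
    Real.exp (-D) ≤ Metric.infDist 0 (frontier (f '' ball 0 1)) := by
  have hhb : ∀ z ∈ ball (0 : ℂ) 1, |(h z).re| ≤ D := by
    intro z hz
    have h1 := (convex_ball (0 : ℂ) 1).norm_image_sub_le_of_norm_deriv_le
      (fun x hx => hd.differentiableAt (isOpen_ball.mem_nhds hx)) hb (mem_ball_self one_pos) hz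
    rw [h0, sub_zero, sub_zero] at h1
    have hz1 : ‖z‖ < 1 := by simpa using hz
    refine (abs_re_le_norm _).trans (h1.trans ?_)
    nlinarith
  have hlow : ∀ z ∈ ball (0 : ℂ) 1, ‖z‖ * Real.exp (-D) ≤ ‖f z‖ := by
    intro z hz
    rw [hfh z hz, norm_mul, Complex.norm_exp]
    gcongr
    exact (abs_le.1 (hhb z hz)).1
  have hup : ∀ z ∈ ball (0 : ℂ) 1, ‖f z‖ ≤ Real.exp D := by
    intro z hz
    have hz1 : ‖z‖ < 1 := by simpa using hz
    rw [hfh z hz, norm_mul, Complex.norm_exp]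
    calc ‖z‖ * Real.exp (h z).re ≤ 1 * Real.exp D := by
          gcongr
          exact (abs_le.1 (hhb z hz)).2
      _ = _ := one_mul _
  have hopen : IsOpen (f '' ball 0 1) := by
    rcases (hf.analyticOnNhd isOpen_ball).is_constant_or_isOpen
      (convex_ball (0 : ℂ) 1).isPreconnected with ⟨w, hw⟩ | hO
    · exfalso
      have e0 := hw 0 (mem_ball_self one_pos)
      have hm : (1 / 2 : ℂ) ∈ ball (0 : ℂ) 1 := by simp; norm_num
      have e1 := hw _ hm
      rw [hfh _ (mem_ball_self one_pos), zero_mul] at e0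
      rw [← e0, hfh _ hm] at e1
      simp at e1
    · exact hO _ Subset.rfl isOpen_ball
  have hne : (frontier (f '' ball 0 1)).Nonempty := by
    rw [nonempty_frontier_iff]
    refine ⟨⟨f 0, 0, mem_ball_self one_pos, rfl⟩, fun hU => ?_⟩
    have : ((Real.exp D + 1 : ℝ) : ℂ) ∈ f '' ball 0 1 := by rw [hU]; trivial
    obtain ⟨z, hz, e⟩ := this
    have h1 := hup z hz
    rw [e, norm_real, Real.norm_eq_abs, abs_of_pos (by positivity)] at h1
    linarith
  rw [Metric.le_infDist hne]
  intro w hw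
  rw [dist_zero_left]
  have hwc : w ∈ closure (f '' ball 0 1) := hw.1
  have hwn : w ∉ f '' ball 0 1 := by rw [← hopen.interior_eq]; exact hw.2
  obtain ⟨u, hu, hlim⟩ := mem_closure_iff_seq_limit.1 hwc
  choose x hx hxu using hu
  obtain ⟨z, hz, φ, hφ, hxz⟩ := (isCompact_closedBall (0 : ℂ) 1).tendsto_subseq
    (fun n => ball_subset_closedBall (hx n))
  have hlim' : Filter.Tendsto (fun n => f (x (φ n))) Filter.atTop (nhds w) := by
    simp only [hxu]
    exact hlim.comp hφ.tendsto_atTop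
  by_cases hz1 : z ∈ ball (0 : ℂ) 1
  · exfalso
    have hc : ContinuousAt f z := (hf.differentiableAt (isOpen_ball.mem_nhds hz1)).continuousAt
    have := tendsto_nhds_unique hlim' (hc.tendsto.comp hxz)
    exact hwn ⟨z, hz1, this.symm⟩
  · have hzn : ‖z‖ = 1 := by
      have h1 : ‖z‖ ≤ 1 := by simpa using hz
      have h2 : ¬ ‖z‖ < 1 := by simpa using hz1
      linarith
    have h1 : Filter.Tendsto (fun n => ‖x (φ n)‖ * Real.exp (-D)) Filter.atTop
        (nhds (‖z‖ * Real.exp (-D))) := hxz.norm.mul_const _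
    rw [hzn, one_mul] at h1
    exact le_of_tendsto_of_tendsto' h1 hlim'.norm (fun n => hlow _ (hx _))

lemma coeff_unique {a b : ℕ → ℂ} {F : ℂ → ℂ} {r : ℝ} (hr : 0 < r)
    (ha : ∀ z : ℂ, ‖z‖ ≤ r → HasSum (fun n => a n * z ^ n) (F z))
    (hb : ∀ z : ℂ, ‖z‖ ≤ r → HasSum (fun n => b n * z ^ n) (F z)) : a = b := by
  have key : ∀ c : ℕ → ℂ, (∀ z : ℂ, ‖z‖ ≤ r → HasSum (fun n => c n * z ^ n) (F z)) →
      HasFPowerSeriesAt F (FormalMultilinearSeries.ofScalars ℂ c) 0 := by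
    intro c hc
    rw [hasFPowerSeriesAt_iff]
    filter_upwards [closedBall_mem_nhds (0 : ℂ) hr] with z hz
    simp only [FormalMultilinearSeries.coeff_ofScalars, zero_add, smul_eq_mul]
    simp only [mul_comm (z ^ _)]
    exact hc z (by simpa using hz)
  have := (key a ha).eq_formalMultilinearSeries (key b hb)
  funext n
  simpa [FormalMultilinearSeries.coeff_ofScalars] using
    congr_arg (FormalMultilinearSeries.coeff · n) this

theorem stmt19 (D : ℝ) (hD1 : (3/4) * Real.log 3 ≤ D) (hD2 : D ≤ 1)
    (f g : ℂ → ℂ) (hf : IsClassA f)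
    (hfD : ∀ z ∈ 𝔻, z ≠ 0 → f z ≠ 0 ∧ ‖z * deriv f z / f z - 1‖ < D)
    (hg : DifferentiableOn ℂ g 𝔻) (hg0 : g 0 = 0) (hsub : Subordinate g f)
    (b : ℕ → ℂ) (hb0 : b 0 = 0)
    (hrep : ∀ z ∈ 𝔻, HasSum (fun k => b k * z^k) (g z))
    (r₀ : ℝ) (hr₀ : 0 < r₀) (hr₀1 : r₀ < 1)
    (heq : r₀ * Real.exp (D * (1 + r₀)) = 1) :
    ∀ r : ℝ, 0 ≤ r → r ≤ r₀ →
      Summable (fun k : ℕ => ‖b k‖ * r^k) ∧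
      ∑' k : ℕ, ‖b k‖ * r^k ≤ Metric.infDist 0 (frontier (f '' 𝔻)) := by
  have hDpos : 0 < D := by
    have : 0 < Real.log 3 := Real.log_pos (by norm_num)
    linarith
  obtain ⟨hfd, f0, f1⟩ := hf
  obtain ⟨h, hd, h0, hb, hfh⟩ := exists_log hfd f0 f1 hfD hDpos
  have hdist : Real.exp (-D) ≤ Metric.infDist 0 (frontier (f '' 𝔻)) :=
    dist_bound hDpos hfd hd h0 hb hfh
  have hr3 : r₀ ≤ 1 / 3 := by
    by_contra hcon
    push Not at hcon
    have h1 : Real.log 3 < D * (1 + r₀) := by nlinarith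
    have h2 : 3 < Real.exp (D * (1 + r₀)) := by
      rwa [← Real.log_lt_iff_lt_exp (by norm_num)]
    nlinarith
  intro r hr hrr
  rcases hr.eq_or_lt with rfl | hrpos
  · have hz : (fun k : ℕ => ‖b k‖ * (0 : ℝ) ^ k) = fun _ => 0 := by
      funext k
      rcases k with _ | k
      · simp [hb0]
      · simp
    rw [hz]
    exact ⟨summable_zero, by rw [tsum_zero]; exact Metric.infDist_nonneg⟩
  have hr13 : r ≤ 1 / 3 := hrr.trans hr3
  obtain ⟨ω, hωd, ω0, hωm, hgω⟩ := hsub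
  have hF : Maj r (r * Real.exp (D * r)) f := by
    refine (maj_id.mul hr ((maj_exp (D * r)).comp hr
      (primitive_maj hd h0 hDpos hb hr hr13))).congr fun z hz => ?_
    exact (hfh z (by simp; linarith)).symm
  have hG : Maj r (r * Real.exp (D * r)) g :=
    (hF.comp hr (schwarz_maj hωd ω0 hωm hr hr13)).congr fun z hz =>
      (hgω z (by simp [𝔻]; linarith)).symm
  obtain ⟨a, h1, h2, h3⟩ := hG
  have hab : a = b := coeff_unique hrpos h3 (fun z hz => hrep z (by simp [𝔻]; linarith))
  subst hab
  refine ⟨h1, h2.trans (le_trans ?_ hdist)⟩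
  calc r * Real.exp (D * r) ≤ r₀ * Real.exp (D * r₀) := by gcongr
    _ = Real.exp (-D) := by
      have e : Real.exp (D * (1 + r₀)) = Real.exp D * Real.exp (D * r₀) := by
        rw [← Real.exp_add]; ring_nf
      rw [e] at heq
      rw [Real.exp_neg]
      have := (Real.exp_pos D).ne'
      apply eq_inv_of_mul_eq_one_left
      linear_combination heq
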